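/- Let (X,d_X) be a metric space, f a continuous node-level statistic in X, and A_1,…,A_N disjoint open subsets of X. Let 𝒟 be the set of graphons W such that f(W)(y) ∈ A_1 ∪ … ∪ A_N for almost every y ∈ [0,1], and for W ∈ 𝒟 define the coloring c_W : [0,1] → {1,…,N} by c_W(y) = j if and only if f(W)(y) ∈ A_j (well-defined for a.e. y). If (W_n)_{n≥1} ⊆ 𝒟 and W_0 ∈ 𝒟 satisfy ‖W_n − W_0‖_□ → 0, then for every j ∈ {1,…,N} the Lebesgue measure of the symmetric difference c_{W_n}⁻¹(j) Δ c_{W_0}⁻¹(j) tends to 0 as n → ∞. -/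

import Mathlib

/-!
Since `f(W n) → f(W 0)` in `L¹`, every subsequence has a further subsequence along which
`f(W n)(y) → f(W 0)(y)` for a.e. `y`. For such `y` the limit lies in some open `A l`, so
`f(W n)(y)` is eventually in the same `A l`, and by disjointness `y` eventually leaves the symmetric
difference of the color classes. Dominated convergence on `[0,1]` then gives measure `0` in the
limit along the further subsequence, hence along the whole sequence.

The metric space `X` need not be separable, so the measurability of
`y ↦ dist (f(W n)(y)) (f(W 0)(y))`, without which the Bochner integral carries no information, is not
automatic. It follows from the fact that a Borel function `g : ℝ → X` has separable range
(`isSeparable_range_of_measurable`). Otherwise the range contains an uncountable `ε`-separated set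
`C`, all of whose subsets are closed. Choose a section `σ : C → ℝ` of `g`. Its image
`T = {x ∈ g⁻¹(C) | σ (g x) = x}` is an uncountable Borel set, and each of its subsets `S` is Borel
too, being `T ∩ (σ ∘ g)⁻¹(S)`. By the Borel isomorphism theorem every subset of `ℝ` would then be
Borel, but there are only continuum many Borel sets (`countable_of_forall_subset_measurableSet`).
-/

open MeasureTheory Set Filter
open scoped symmDiff

noncomputable section

/-- The unit interval `[0,1]` as a subset of `ℝ`. -/
def I01 : Set ℝ := Set.Icc 0 1

/-- A graphon: a symmetric measurable kernel with values in `[0,1]`. -/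
structure Graphon where
  W : ℝ → ℝ → ℝ
  measurable : Measurable (Function.uncurry W)
  symm : ∀ x y, W x y = W y x
  nonneg : ∀ x y, 0 ≤ W x y
  le_one : ∀ x y, W x y ≤ 1

/-- The cut norm `‖U‖_□` of a kernel `U`. -/
def cutNorm (U : ℝ → ℝ → ℝ) : ℝ :=
  sSup { r | ∃ A B : Set ℝ, MeasurableSet A ∧ MeasurableSet B ∧ A ⊆ I01 ∧ B ⊆ I01 ∧
    r = |∫ x in A, ∫ y in B, U x y| }

/-- A continuous node-level statistic with values in a metric space `X`:
it assigns to each graphon a measurable `X`-valued function on `[0,1]` lying in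
`L¹([0,1], X)`, and it is continuous: whenever `‖Wₙ − W₀‖_□ → 0`, we have
`d₁(f(Wₙ), f(W₀)) = ∫₀¹ d_X(f(Wₙ)(y), f(W₀)(y)) dy → 0`. -/
structure NodeStat (X : Type*) [MetricSpace X] [MeasurableSpace X] [BorelSpace X] where
  val : Graphon → ℝ → X
  meas : ∀ V, Measurable (val V)
  integ : ∀ V, ∃ x₀ : X, Integrable (fun y => dist x₀ (val V y)) (volume.restrict I01)
  cont : ∀ (Wn : ℕ → Graphon) (W0 : Graphon),
    Tendsto (fun n => cutNorm fun x y => (Wn n).W x y - W0.W x y) atTop (nhds 0) →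
    Tendsto (fun n => ∫ y in I01, dist (val (Wn n) y) (val W0 y)) atTop (nhds 0)

/-- A Borel set of reals all of whose subsets are Borel is countable: otherwise it would be Borel
isomorphic to `ℝ`, and all `2 ^ 𝔠` subsets of `ℝ` would be Borel. -/
theorem countable_of_forall_subset_measurableSet {T : Set ℝ}
    (hT : ∀ S ⊆ T, MeasurableSet S) : T.Countable := by
  by_contra hc
  have hTm : MeasurableSet T := hT T subset_rfl
  have : StandardBorelSpace T := hTm.standardBorel
  have hc' : ¬ Countable T := fun h => hc (countable_coe_iff.1 h)
  have hR : ¬ Countable ℝ := fun h => Cardinal.not_countable_real (countable_univ_iff.2 h)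
  let e : T ≃ᵐ ℝ := PolishSpace.measurableEquivOfNotCountable hc' hR
  have hall : ∀ S : Set ℝ, MeasurableSet S := by
    intro S
    have h1 : MeasurableSet (Subtype.val '' (e ⁻¹' S) : Set ℝ) :=
      hT _ (by rintro _ ⟨x, -, rfl⟩; exact x.2)
    have h2 : MeasurableSet (e ⁻¹' S) := by
      have := measurable_subtype_coe (p := (· ∈ T)) h1
      rwa [preimage_image_eq _ Subtype.val_injective] at this
    exact (e.measurableSet_preimage).1 h2
  have hle : Cardinal.mk {t : Set ℝ | MeasurableSet t} ≤ Cardinal.continuum := by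
    have h := MeasurableSpace.cardinal_measurableSet_le_continuum
      (s := MeasurableSpace.countableGeneratingSet ℝ)
      ((Cardinal.le_aleph0_iff_set_countable.2
        (MeasurableSpace.countable_countableGeneratingSet (α := ℝ))).trans
        Cardinal.aleph0_le_continuum)
    rwa [MeasurableSpace.generateFrom_countableGeneratingSet] at h
  have huniv : {t : Set ℝ | MeasurableSet t} = univ := eq_univ_of_forall hall
  rw [huniv, Cardinal.mk_univ, Cardinal.mk_set, Cardinal.mk_real] at hle
  exact absurd hle (not_le.2 (Cardinal.cantor _))

/-- A subset `C` of the range of a Borel function `g`, all of whose subsets are measurable, is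
countable. The image `T` of a section `σ` of `g` over `C` is Borel together with all its subsets, since `T`
is the fixed point set of the Borel map `σ ∘ g` in `g⁻¹(C)`. -/
theorem countable_of_subset_range {X : Type*} [MeasurableSpace X] {g : ℝ → X}
    (hg : Measurable g) {C : Set X} (hCr : C ⊆ range g)
    (hC : ∀ D ⊆ C, MeasurableSet D) : C.Countable := by
  classical
  have hsec : ∀ x : X, ∃ r : ℝ, x ∈ C → g r = x := fun x => by
    by_cases hx : x ∈ C
    · obtain ⟨r, hr⟩ := hCr hx
      exact ⟨r, fun _ => hr⟩
    · exact ⟨0, fun h => absurd h hx⟩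
  choose σ hσ using hsec
  -- Within `g⁻¹(C)`, the preimage of any set of reals, Borel or not, under `σ ∘ g` is Borel.
  have hpre : ∀ B : Set ℝ, MeasurableSet (g ⁻¹' (C ∩ σ ⁻¹' B)) := fun B =>
    hg (hC _ inter_subset_left)
  have hCm : MeasurableSet (g ⁻¹' C) := hg (hC C subset_rfl)
  have hh : Measurable (fun r : g ⁻¹' C => σ (g r)) := by
    intro B _
    refine ⟨g ⁻¹' (C ∩ σ ⁻¹' B), hpre B, ?_⟩
    ext ⟨r, hr⟩
    have hr' : g r ∈ C := hr
    exact and_iff_right hr'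
  have hT : MeasurableSet (σ '' C) := by
    have h1 : MeasurableSet {r : g ⁻¹' C | σ (g r) = (r : ℝ)} :=
      measurableSet_eq_fun hh measurable_subtype_coe
    convert hCm.subtype_image h1 using 1
    ext r
    constructor
    · rintro ⟨x, hx, rfl⟩
      exact ⟨⟨σ x, by simpa [hσ x hx] using hx⟩, by simp [hσ x hx], rfl⟩
    · rintro ⟨⟨r, hr⟩, h, rfl⟩
      exact ⟨g r, hr, h⟩
  have hcount : (σ '' C).Countable := by
    refine countable_of_forall_subset_measurableSet fun S hS => ?_
    convert hT.inter (hpre S) using 1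
    ext r
    constructor
    · intro hr
      obtain ⟨x, hx, rfl⟩ := hS hr
      refine ⟨⟨x, hx, rfl⟩, ?_⟩
      simpa [hσ x hx] using And.intro hx hr
    · rintro ⟨⟨x, hx, rfl⟩, h⟩
      have h' : σ (g (σ x)) ∈ S := h.2
      rwa [hσ x hx] at h'
  refine countable_of_injective_of_countable_image (f := σ) (fun x hx y hy hxy => ?_) hcount
  rw [← hσ x hx, ← hσ y hy, hxy]

/-- A Borel function from `ℝ` to an arbitrary metric space has separable range. -/
theorem isSeparable_range_of_measurable {X : Type*} [MetricSpace X] [MeasurableSpace X]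
    [BorelSpace X] {g : ℝ → X} (hg : Measurable g) :
    TopologicalSpace.IsSeparable (range g) := by
  suffices h : ∃ t, t ⊆ range g ∧ t.Countable ∧ range g ⊆ closure t by
    obtain ⟨t, -, ht, hsub⟩ := h
    exact ⟨t, ht, hsub⟩
  refine UniformSpace.subset_countable_closure_of_almost_dense_set _ fun U hU => ?_
  obtain ⟨ε, hε, hεU⟩ := Metric.mem_uniformity_dist.1 hU
  -- A maximal `ε`-separated subset `C` of the range is an `ε`-net.
  obtain ⟨C, hC⟩ := zorn_subset
    {C : Set X | C ⊆ range g ∧ C.Pairwise fun x y => ε ≤ dist x y} (by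
      intro c hc hchain
      refine ⟨⋃₀ c, ⟨sUnion_subset fun s hs => (hc hs).1, ?_⟩, fun s hs => subset_sUnion_of_mem hs⟩
      exact (pairwise_sUnion hchain.directedOn).2 fun s hs => (hc hs).2)
  obtain ⟨⟨hCr, hCp⟩, hmax⟩ := hC
  refine ⟨C, countable_of_subset_range hg hCr fun D hD =>
    (Metric.isClosed_of_pairwise_le_dist hε (hCp.mono hD)).measurableSet, fun x hx => ?_⟩
  by_contra hcon
  have hfar : ∀ y ∈ C, ε ≤ dist y x := by
    intro y hy
    by_contra hlt
    exact hcon (mem_iUnion₂.2 ⟨y, hy, hεU (not_le.1 hlt)⟩)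
  have hxC : x ∈ C := hmax (y := insert x C)
    ⟨insert_subset hx hCr, hCp.insert fun y hy _ =>
      ⟨by rw [dist_comm]; exact hfar y hy, hfar y hy⟩⟩ (subset_insert x C) (mem_insert x C)
  have := hfar x hxC
  rw [dist_self] at this
  exact absurd hε (not_lt.2 this)

/-- **Clustering by continuous node-level statistics is structurally consistent.**
Let `f` be a continuous node-level statistic in a metric space `X` and
`A 1, …, A N` disjoint open subsets of `X`.  Suppose every graphon `W n`
(`n = 0` being the limit) satisfies `f(W n)(y) ∈ ⋃ j, A j` for a.e. `y ∈ [0,1]`,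
and `‖W n − W 0‖_□ → 0`.  Then for every color `j`, the Lebesgue measure of the
symmetric difference of the color classes
`c_{W n}⁻¹(j) = {y ∈ [0,1] : f(W n)(y) ∈ A j}` and `c_{W 0}⁻¹(j)` tends to `0`. -/
theorem structural_consistency_node_stat
    {X : Type*} [MetricSpace X] [MeasurableSpace X] [BorelSpace X]
    (f : NodeStat X) (N : ℕ) (A : Fin N → Set X)
    (hopen : ∀ j, IsOpen (A j))
    (hdisj : ∀ j l, j ≠ l → Disjoint (A j) (A l))
    (W : ℕ → Graphon)
    (hmem : ∀ n, ∀ᵐ y ∂(volume.restrict I01), f.val (W n) y ∈ ⋃ j, A j)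
    (hconv : Tendsto (fun n => cutNorm fun x y => (W n).W x y - (W 0).W x y)
      atTop (nhds 0)) :
    ∀ j : Fin N,
      Tendsto (fun n =>
          (volume (({y ∈ I01 | f.val (W n) y ∈ A j}) ∆ ({y ∈ I01 | f.val (W 0) y ∈ A j}))).toReal)
        atTop (nhds 0) := by
  intro j
  have hfin : IsFiniteMeasure (volume.restrict I01) :=
    ⟨by simp [I01]⟩
  have hI : MeasurableSet I01 := measurableSet_Icc
  have hsm : ∀ V, StronglyMeasurable (f.val V) := fun V =>
    stronglyMeasurable_iff_measurable_separable.2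
      ⟨f.meas V, isSeparable_range_of_measurable (f.meas V)⟩
  have hdm : ∀ n, StronglyMeasurable (fun y => dist (f.val (W n) y) (f.val (W 0) y)) :=
    fun n => (hsm _).dist (hsm _)
  have hint : ∀ n, Integrable (fun y => dist (f.val (W n) y) (f.val (W 0) y))
      (volume.restrict I01) := by
    intro n
    obtain ⟨a, ha⟩ := f.integ (W n)
    obtain ⟨b, hb⟩ := f.integ (W 0)
    refine ((ha.add hb).add (integrable_const (dist a b))).mono' (hdm n).aestronglyMeasurable
      (Eventually.of_forall fun y => ?_)
    simp only [Pi.add_apply, Real.norm_eq_abs, abs_dist]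
    have h1 := dist_triangle4 (f.val (W n) y) a b (f.val (W 0) y)
    rw [dist_comm (f.val (W n) y) a] at h1
    linarith
  have hL1 : Tendsto (fun n => eLpNorm ((fun y => dist (f.val (W n) y) (f.val (W 0) y)) -
      fun _ => (0 : ℝ)) 1 (volume.restrict I01)) atTop (nhds 0) := by
    have h := ENNReal.tendsto_ofReal (f.cont W (W 0) hconv)
    rw [ENNReal.ofReal_zero] at h
    refine h.congr fun n => ?_
    rw [eLpNorm_one_eq_lintegral_enorm, ← ofReal_integral_norm_eq_lintegral_enorm]
    · simp
    · simpa using (hint n).sub (integrable_const (0 : ℝ))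
  have hmeas : TendstoInMeasure (volume.restrict I01)
      (fun n y => dist (f.val (W n) y) (f.val (W 0) y)) atTop (fun _ => (0 : ℝ)) :=
    tendstoInMeasure_of_tendsto_eLpNorm one_ne_zero (fun n => (hdm n).aestronglyMeasurable)
      aestronglyMeasurable_const hL1
  have hcm : ∀ n, MeasurableSet {y ∈ I01 | f.val (W n) y ∈ A j} := fun n =>
    hI.inter (f.meas (W n) (hopen j).measurableSet)
  refine tendsto_of_subseq_tendsto fun ns hns => ?_
  have hsub : TendstoInMeasure (volume.restrict I01)
      (fun k y => dist (f.val (W (ns k)) y) (f.val (W 0) y)) atTop (fun _ => (0 : ℝ)) :=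
    fun ε hε => (hmeas ε hε).comp hns
  obtain ⟨ms, -, hae⟩ := hsub.exists_seq_tendsto_ae
  refine ⟨ms, ?_⟩
  have hlim := tendsto_measure_of_ae_tendsto_indicator (μ := volume) (L := atTop)
    (As := fun k => {y ∈ I01 | f.val (W (ns (ms k))) y ∈ A j} ∆ {y ∈ I01 | f.val (W 0) y ∈ A j})
    MeasurableSet.empty (fun k => (hcm _).symmDiff (hcm _)) hI (by simp [I01])
    (Eventually.of_forall fun k => symmDiff_subset_union.trans
      (union_subset (sep_subset _ _) (sep_subset _ _))) (by
      have h0 := (ae_restrict_iff' hI).1 (hmem 0)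
      have h1 := (ae_restrict_iff' hI).1 hae
      filter_upwards [h0, h1] with y hy0 hy1
      by_cases hy : y ∈ I01
      · obtain ⟨l, hl⟩ := mem_iUnion.1 (hy0 hy)
        have ht : Tendsto (fun k => f.val (W (ns (ms k))) y) atTop (nhds (f.val (W 0) y)) :=
          tendsto_iff_dist_tendsto_zero.2 (hy1 hy)
        filter_upwards [ht.eventually ((hopen l).mem_nhds hl)] with k hk0
        have hk : f.val (W (ns (ms k))) y ∈ A l := hk0
        by_cases hjl : j = l
        · subst hjl
          simp [mem_symmDiff, hy, hk, hl]
        · have hd := hdisj j l hjl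
          have hk' : f.val (W (ns (ms k))) y ∉ A j := fun h => disjoint_left.1 hd h hk
          have hl' : f.val (W 0) y ∉ A j := fun h => disjoint_left.1 hd h hl
          simp [mem_symmDiff, hk', hl']
      · simp [mem_symmDiff, hy])
  rw [measure_empty] at hlim
  have := (ENNReal.tendsto_toReal ENNReal.zero_ne_top).comp hlim
  simpa [Function.comp_def] using this

end
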